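/- For all real numbers u and v, the function ρ ↦ Φ₂(u,v;ρ) is differentiable at every ρ ∈ (-1,1), and its derivative equals the standard bivariate normal density: ∂Φ₂(u,v;ρ)/∂ρ = φ₂(u,v;ρ) (Plackett's identity, used in the paper as Φ₂^{ρ} = φ₂). -/

import Mathlib

/-!
Completing the square factors the density as `φ₂(s,t;ρ) = φ(s) φ((t - ρ s)/σ)/σ` with `σ = √(1-ρ²)`
(`phi2_eq_left`), so integrating out `t` leaves a one-dimensional integral
`Φ₂(u,v;ρ) = ∫_{s ≤ u} φ(s) Φ((v - ρ s)/σ) ds` (`Phi2_eq`). Differentiating in `ρ` under the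
integral sign gives the integrand `φ(s) φ((v - ρ s)/σ) (ρ v - s)/σ³`, which is dominated locally
uniformly in `ρ` by a multiple of `(|v| + |s|) φ(s)`. By the same factorization of the density with
the two variables exchanged (`phi2_eq_right`), this integrand is exactly `∂φ₂(s,v;ρ)/∂s`
(`hasDerivAt_phi2`). Since `φ₂(s,v;ρ) → 0` as `s → -∞`, the fundamental theorem of calculus on
`(-∞, u]` yields `φ₂(u,v;ρ)`.
-/


open Real MeasureTheory

/-- Standard normal density. -/
noncomputable def phi (t : ℝ) : ℝ := (Real.sqrt (2 * Real.pi))⁻¹ * Real.exp (-(t ^ 2) / 2)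

/-- Standard normal CDF. -/
noncomputable def Phi (u : ℝ) : ℝ := ∫ t in Set.Iic u, phi t

/-- Standard bivariate normal density with correlation ρ. -/
noncomputable def phi2 (s t ρ : ℝ) : ℝ :=
  (2 * Real.pi * Real.sqrt (1 - ρ ^ 2))⁻¹ *
    Real.exp (-(s ^ 2 - 2 * ρ * s * t + t ^ 2) / (2 * (1 - ρ ^ 2)))

/-- Standard bivariate normal CDF with correlation ρ. -/
noncomputable def Phi2 (u v ρ : ℝ) : ℝ :=
  ∫ s in Set.Iic u, ∫ t in Set.Iic v, phi2 s t ρ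

lemma phi_nonneg (t : ℝ) : 0 ≤ phi t := by unfold phi; positivity

lemma phi_le_one (t : ℝ) : phi t ≤ 1 := by
  unfold phi
  have h1 : (Real.sqrt (2 * Real.pi))⁻¹ ≤ 1 := by
    apply inv_le_one_of_one_le₀
    rw [Real.one_le_sqrt]
    linarith [Real.pi_gt_three]
  have h2 : Real.exp (-(t ^ 2) / 2) ≤ 1 := by
    rw [Real.exp_le_one_iff]
    nlinarith [sq_nonneg t]
  exact mul_le_one₀ h1 (Real.exp_pos _).le h2

lemma continuous_phi : Continuous phi := by unfold phi; fun_prop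

lemma integrable_phi : Integrable phi := by
  have h := (integrable_exp_neg_mul_sq (b := 1 / 2) (by norm_num)).const_mul
    (Real.sqrt (2 * Real.pi))⁻¹
  refine h.congr (Filter.Eventually.of_forall fun t => ?_)
  simp only [phi]
  ring_nf

lemma integrable_mul_phi : Integrable (fun t => t * phi t) := by
  have h := (integrable_mul_exp_neg_mul_sq (b := 1 / 2) (by norm_num)).const_mul
    (Real.sqrt (2 * Real.pi))⁻¹
  refine h.congr (Filter.Eventually.of_forall fun t => ?_)
  simp only [phi]
  ring_nf

lemma hasDerivAt_phi (t : ℝ) : HasDerivAt phi (-t * phi t) t := by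
  have h : HasDerivAt (fun t : ℝ => -(t ^ 2) / 2) (-t) t := by
    refine ((hasDerivAt_pow 2 t).fun_neg.div_const 2).congr_deriv ?_
    norm_num
    ring
  refine (h.exp.const_mul (Real.sqrt (2 * Real.pi))⁻¹).congr_deriv ?_
  simp only [phi]
  ring

lemma tendsto_phi_atBot : Filter.Tendsto phi Filter.atBot (nhds 0) := by
  have h : Filter.Tendsto (fun t : ℝ => -(t ^ 2) / 2) Filter.atBot Filter.atBot := by
    have h2 : Filter.Tendsto (fun t : ℝ => t ^ 2) Filter.atBot Filter.atTop := by
      refine ((Filter.tendsto_pow_atTop (α := ℝ) two_ne_zero).comp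
        Filter.tendsto_abs_atBot_atTop).congr fun t => ?_
      simp
    exact (Filter.tendsto_neg_atTop_atBot.comp h2).atBot_div_const two_pos
  have h3 := (Real.tendsto_exp_atBot.comp h).const_mul (Real.sqrt (2 * Real.pi))⁻¹
  rw [mul_zero] at h3
  exact h3

lemma hasDerivAt_Phi (x : ℝ) : HasDerivAt Phi (phi x) x := by
  have h : Phi = fun y => Phi 0 + ∫ t in (0 : ℝ)..y, phi t := by
    funext y
    rw [← intervalIntegral.integral_Iic_sub_Iic integrable_phi.integrableOn
      integrable_phi.integrableOn]
    simp [Phi]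
  rw [h]
  exact (intervalIntegral.integral_hasDerivAt_right
    (continuous_phi.intervalIntegrable _ _)
    (continuous_phi.stronglyMeasurableAtFilter _ _) continuous_phi.continuousAt).const_add _

lemma continuous_Phi : Continuous Phi :=
  continuous_iff_continuousAt.2 fun x => (hasDerivAt_Phi x).continuousAt

lemma Phi_nonneg (x : ℝ) : 0 ≤ Phi x := integral_nonneg fun t => phi_nonneg t

lemma Phi_le (x : ℝ) : Phi x ≤ ∫ t, phi t :=
  setIntegral_le_integral integrable_phi (Filter.Eventually.of_forall phi_nonneg)

/-- Conditioning on the first coordinate: given `s`, the second one is normal with mean `r * s` and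
variance `1 - r ^ 2`. -/
lemma phi2_eq_left (s t : ℝ) {r : ℝ} (hr : 0 < 1 - r ^ 2) :
    phi2 s t r = phi s * (phi ((t - r * s) / Real.sqrt (1 - r ^ 2)) / Real.sqrt (1 - r ^ 2)) := by
  have hs := Real.sq_sqrt hr.le
  have hs0 := Real.sqrt_pos.2 hr
  have hp : (2 * Real.pi)⁻¹ = (Real.sqrt (2 * Real.pi))⁻¹ * (Real.sqrt (2 * Real.pi))⁻¹ := by
    rw [← mul_inv, Real.mul_self_sqrt (by positivity)]
  have he : Real.exp (-(s ^ 2 - 2 * r * s * t + t ^ 2) / (2 * (1 - r ^ 2))) =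
      Real.exp (-(s ^ 2) / 2) *
        Real.exp (-(((t - r * s) / Real.sqrt (1 - r ^ 2)) ^ 2) / 2) := by
    rw [← Real.exp_add, div_pow, hs]
    congr 1
    field_simp
    ring
  simp only [phi2, phi]
  rw [he, mul_inv, hp]
  ring

lemma phi2_comm (s t r : ℝ) : phi2 s t r = phi2 t s r := by
  simp only [phi2]
  ring_nf

lemma phi2_eq_right (s t : ℝ) {r : ℝ} (hr : 0 < 1 - r ^ 2) :
    phi2 s t r = phi t * (phi ((s - r * t) / Real.sqrt (1 - r ^ 2)) / Real.sqrt (1 - r ^ 2)) := by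
  rw [phi2_comm, phi2_eq_left t s hr]

lemma integral_Iic_phi_comp (v a : ℝ) {c : ℝ} (hc : 0 < c) :
    ∫ t in Set.Iic v, phi ((t - a) / c) / c = Phi ((v - a) / c) := by
  set g : ℝ → ℝ := (Set.Iic ((v - a) / c)).indicator phi with hg
  have h1 : (Set.Iic v).indicator (fun t => phi ((t - a) / c) / c) =
      fun t => g ((t - a) / c) / c := by
    funext t
    simp only [hg, Set.indicator, Set.mem_Iic, div_le_div_iff_of_pos_right hc,
      sub_le_sub_iff_right]
    split_ifs <;> simp
  rw [← integral_indicator measurableSet_Iic, h1, integral_div,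
    integral_sub_right_eq_self (fun t => g (t / c)) a, Measure.integral_comp_div, hg,
    integral_indicator measurableSet_Iic, abs_of_pos hc, smul_eq_mul, mul_div_cancel_left₀ _ hc.ne']
  rfl

lemma Phi2_eq (u v : ℝ) {r : ℝ} (hr : 0 < 1 - r ^ 2) :
    Phi2 u v r = ∫ s in Set.Iic u, phi s * Phi ((v - r * s) / Real.sqrt (1 - r ^ 2)) := by
  unfold Phi2
  congr 1
  funext s
  simp_rw [phi2_eq_left s _ hr]
  rw [integral_const_mul, integral_Iic_phi_comp v (r * s) (Real.sqrt_pos.2 hr)]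

lemma hasDerivAt_arg (v s : ℝ) {r : ℝ} (hr : 0 < 1 - r ^ 2) :
    HasDerivAt (fun r => (v - r * s) / Real.sqrt (1 - r ^ 2))
      ((r * v - s) / ((1 - r ^ 2) * Real.sqrt (1 - r ^ 2))) r := by
  have hs := Real.sq_sqrt hr.le
  have hs0 := Real.sqrt_pos.2 hr
  have h1 : HasDerivAt (fun r : ℝ => 1 - r ^ 2) (-(2 * r)) r := by
    simpa using (hasDerivAt_pow 2 r).const_sub 1
  have h2 : HasDerivAt (fun r : ℝ => v - r * s) (-s) r := by
    simpa using ((hasDerivAt_id r).mul_const s).const_sub v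
  refine (h2.div (h1.sqrt hr.ne') hs0.ne').congr_deriv ?_
  rw [hs]
  field_simp
  rw [hs]
  ring

/-- The `ρ`-derivative of `φ(s) Φ((v - ρ s)/σ)` is an exact `s`-derivative, namely that of
`φ₂(s,v;ρ)`. -/
lemma hasDerivAt_phi2 (v s : ℝ) {r : ℝ} (hr : 0 < 1 - r ^ 2) :
    HasDerivAt (fun s => phi2 s v r)
      (phi s * (phi ((v - r * s) / Real.sqrt (1 - r ^ 2)) *
        ((r * v - s) / ((1 - r ^ 2) * Real.sqrt (1 - r ^ 2))))) s := by
  have hs := Real.sq_sqrt hr.le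
  have hs0 := Real.sqrt_pos.2 hr
  have hl : HasDerivAt (fun s => (s - r * v) / Real.sqrt (1 - r ^ 2))
      (1 / Real.sqrt (1 - r ^ 2)) s :=
    ((hasDerivAt_id s).sub_const _).div_const _
  have h := (((hasDerivAt_phi _).comp s hl).div_const (Real.sqrt (1 - r ^ 2))).const_mul (phi v)
  have hfun : (fun s => phi2 s v r) = fun s =>
      phi v * (phi ((s - r * v) / Real.sqrt (1 - r ^ 2)) / Real.sqrt (1 - r ^ 2)) :=
    funext fun s => phi2_eq_right s v hr
  rw [hfun]
  refine h.congr_deriv ?_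
  have e := (phi2_eq_right s v hr).symm.trans (phi2_eq_left s v hr)
  calc _ = (phi v * (phi ((s - r * v) / Real.sqrt (1 - r ^ 2)) / Real.sqrt (1 - r ^ 2))) *
        ((r * v - s) / Real.sqrt (1 - r ^ 2) ^ 2) := by field_simp; ring
    _ = _ := by rw [e, hs]; field_simp

lemma tendsto_phi2_atBot (v : ℝ) {r : ℝ} (hr : 0 < 1 - r ^ 2) :
    Filter.Tendsto (fun s => phi2 s v r) Filter.atBot (nhds 0) := by
  have hl : Filter.Tendsto (fun s => (s - r * v) / Real.sqrt (1 - r ^ 2))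
      Filter.atBot Filter.atBot :=
    (Filter.tendsto_atBot_add_const_right _ (-(r * v)) Filter.tendsto_id).atBot_div_const
      (Real.sqrt_pos.2 hr)
  have h := ((tendsto_phi_atBot.comp hl).div_const (Real.sqrt (1 - r ^ 2))).const_mul (phi v)
  simp only [zero_div, mul_zero] at h
  refine h.congr fun s => ?_
  rw [phi2_eq_right s v hr]
  rfl

/-- Plackett's identity: for all real u, v, the map ρ ↦ Φ₂(u,v;ρ) is differentiable at
every ρ ∈ (-1,1) with derivative φ₂(u,v;ρ). -/
theorem plackett_identity (u v : ℝ) :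
    ∀ ρ ∈ Set.Ioo (-1 : ℝ) 1,
      HasDerivAt (fun r => Phi2 u v r) (phi2 u v ρ) ρ := by
  intro ρ hρ
  -- A symmetric interval around `ρ` whose closure stays inside `(-1, 1)`.
  obtain ⟨m, hm1, hm2⟩ := exists_between (abs_lt.2 hρ)
  have hm0 : 0 ≤ m := (abs_nonneg ρ).trans hm1.le
  have hc : 0 < 1 - m ^ 2 := by nlinarith
  have hmem : Set.Ioo (-m) m ∈ nhds ρ := Ioo_mem_nhds (abs_lt.1 hm1).1 (abs_lt.1 hm1).2
  have hlow : ∀ r ∈ Set.Ioo (-m) m, 1 - m ^ 2 ≤ 1 - r ^ 2 := by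
    intro r hr
    nlinarith [hr.1, hr.2]
  have hpos : ∀ r ∈ Set.Ioo (-m) m, 0 < 1 - r ^ 2 := fun r hr => hc.trans_le (hlow r hr)
  have hρ0 := hpos ρ (abs_lt.1 hm1)
  have hcs := Real.sqrt_pos.2 hc
  have key := hasDerivAt_integral_of_dominated_loc_of_deriv_le
    (μ := volume.restrict (Set.Iic u))
    (F := fun r s => phi s * Phi ((v - r * s) / Real.sqrt (1 - r ^ 2)))
    (F' := fun r s => phi s * (phi ((v - r * s) / Real.sqrt (1 - r ^ 2)) *
      ((r * v - s) / ((1 - r ^ 2) * Real.sqrt (1 - r ^ 2)))))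
    (bound := fun s => phi s * ((|v| + |s|) / ((1 - m ^ 2) * Real.sqrt (1 - m ^ 2))))
    hmem
    (Filter.Eventually.of_forall fun r => (continuous_phi.mul
      (continuous_Phi.comp (by fun_prop))).aestronglyMeasurable)
    (by
      refine Integrable.mul_bdd (c := ∫ t, phi t) integrable_phi.integrableOn
        (continuous_Phi.comp (by fun_prop)).aestronglyMeasurable
        (Filter.Eventually.of_forall fun s => ?_)
      rw [Real.norm_of_nonneg (Phi_nonneg _)]
      exact Phi_le _)
    (continuous_phi.mul ((continuous_phi.comp (by fun_prop)).mul
      (by fun_prop))).aestronglyMeasurable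
    (by
      refine Filter.Eventually.of_forall fun s r hr => ?_
      have hr0 := hpos r hr
      have hrs := Real.sqrt_pos.2 hr0
      have hr1 : |r| ≤ 1 := (abs_lt.2 hr).le.trans hm2.le
      rw [norm_mul, norm_mul, Real.norm_of_nonneg (phi_nonneg _),
        Real.norm_of_nonneg (phi_nonneg _), Real.norm_eq_abs, abs_div,
        abs_of_pos (mul_pos hr0 hrs)]
      refine mul_le_mul_of_nonneg_left ?_ (phi_nonneg s)
      refine (mul_le_of_le_one_left (by positivity) (phi_le_one _)).trans ?_
      have hnum : |r * v - s| ≤ |v| + |s| := by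
        refine (abs_sub _ _).trans ?_
        rw [abs_mul]
        have := mul_le_of_le_one_left (abs_nonneg v) hr1
        linarith
      have := hlow r hr
      gcongr)
    (by
      have h := ((integrable_phi.const_mul |v|).add integrable_mul_phi.norm).div_const
        ((1 - m ^ 2) * Real.sqrt (1 - m ^ 2))
      refine (h.congr (Filter.Eventually.of_forall fun s => ?_)).integrableOn
      simp only [Pi.add_apply, norm_mul, Real.norm_of_nonneg (phi_nonneg _), Real.norm_eq_abs]
      ring)
    (Filter.Eventually.of_forall fun s r hr =>
      ((hasDerivAt_Phi _).comp r (hasDerivAt_arg v s (hpos r hr))).const_mul (phi s))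
  obtain ⟨hint, hder⟩ := key
  rw [integral_Iic_of_hasDerivAt_of_tendsto' (fun s _ => hasDerivAt_phi2 v s hρ0) hint
    (tendsto_phi2_atBot v hρ0), sub_zero] at hder
  exact hder.congr_of_eventuallyEq (Filter.mem_of_superset hmem fun r hr => Phi2_eq u v (hpos r hr))
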